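/- Assume R is irreducible. Then NS(R) is an infinite cyclic group: there is a unique W-invariant symmetric even ℤ-bilinear form b_R : Q∨ × Q∨ → ℤ (the basic inner product) such that the minimum of b_R(α∨, α∨) over all roots α of R equals 2 (i.e. b_R(α∨, α∨) = 2 for all short coroots α∨); b_R is positive definite, and every W-invariant symmetric even ℤ-bilinear form on Q∨ equals n · b_R for a unique integer n. -/

import Mathlib

/-- `b` is (the `ℚ`-bilinear extension of) a `W`-invariant symmetric even
`ℤ`-bilinear form on the coroot lattice `Q`, i.e. an element of the
Néron–Severi group `NS(R)`. -/
def IsNSForm {V : Type*} [AddCommGroup V] [Module ℚ V]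
    (W : Subgroup (V ≃ₗ[ℚ] V)) (Q : AddSubgroup V)
    (b : V →ₗ[ℚ] V →ₗ[ℚ] ℚ) : Prop :=
  (∀ x y : V, b x y = b y x) ∧
  (∀ w ∈ W, ∀ x y : V, b (w x) (w y) = b x y) ∧
  (∀ x ∈ Q, ∀ y ∈ Q, ∃ n : ℤ, b x y = (n : ℚ)) ∧
  (∀ x ∈ Q, ∃ n : ℤ, b x x = 2 * (n : ℚ))

/-!
The coroots form an irreducible crystallographic root system in their own right, so a form that is
invariant under its reflections and vanishes on one pair `(α∨, α∨)` has `α∨` in its kernel; the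
kernel is stable under `W`, hence everything, and an invariant form is determined by its value on a
single `(α∨, α∨)`. The canonical form `∑ α ⊗ α` is invariant and positive definite. Rescale it so
that the shortest coroots have square length `2`. Ratios of square lengths in an irreducible
crystallographic root system are integral in one of the two directions, so every coroot then has
even square length, and the identity `2 b(α∨, x) = α(x) b(α∨, α∨)` makes the form integral on the
coroot lattice. Comparing values on a short coroot shows that it generates.
-/


open Function Module Set
open LinearMap (BilinForm)

section Lattice

variable {R M N V : Type*} [CommRing R] [AddCommGroup M] [Module R M] [AddCommGroup N] [Module R N]
  [AddCommGroup V] [Module ℚ V]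

theorem isOrthogonal_of_mem_closure {B : BilinForm R M} {S : Set (M ≃ₗ[R] M)}
    (hS : ∀ w ∈ S, B.IsOrthogonal w) {w : M ≃ₗ[R] M} (hw : w ∈ Subgroup.closure S) :
    B.IsOrthogonal w := by
  induction hw using Subgroup.closure_induction with
  | mem w hw => exact hS w hw
  | one => exact fun x y ↦ rfl
  | mul u v _ _ hu hv => exact fun x y ↦ (hu (v x) (v y)).trans (hv x y)
  | inv u _ hu =>
    intro x y
    simpa using! (hu (u⁻¹ x) (u⁻¹ y)).symm

theorem apply_mem_of_mem_closure {B : M →ₗ[R] M →ₗ[R] N} {A : AddSubgroup N} {S : Set M}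
    (hS : ∀ x ∈ S, ∀ y ∈ S, B x y ∈ A) {x y : M}
    (hx : x ∈ AddSubgroup.closure S) (hy : y ∈ AddSubgroup.closure S) : B x y ∈ A := by
  induction hx, hy using AddSubgroup.closure_induction₂ with
  | mem x y hx hy => exact hS x hx y hy
  | zero_left y _ => simp
  | zero_right x _ => simp
  | add_left x₁ x₂ y _ _ _ h₁ h₂ => simpa using add_mem h₁ h₂
  | add_right x y₁ y₂ _ _ _ h₁ h₂ => simpa using add_mem h₁ h₂
  | neg_left x y _ _ h => simpa using h
  | neg_right x y _ _ h => simpa using h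

theorem exists_apply_self_eq_two_mul_of_mem_closure {b : BilinForm R M} (hb : b.IsSymm) {S : Set M}
    (h_int : ∀ x ∈ AddSubgroup.closure S, ∀ y ∈ AddSubgroup.closure S, ∃ n : ℤ, b x y = n)
    (heven : ∀ x ∈ S, ∃ n : ℤ, b x x = 2 * n) {x : M} (hx : x ∈ AddSubgroup.closure S) :
    ∃ n : ℤ, b x x = 2 * n := by
  induction hx using AddSubgroup.closure_induction with
  | mem x hx => exact heven x hx
  | zero => exact ⟨0, by simp⟩
  | add x y hx hy h₁ h₂ =>
    obtain ⟨m, hm⟩ := h₁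
    obtain ⟨n, hn⟩ := h₂
    obtain ⟨k, hk⟩ := h_int x hx y hy
    have hk' : b y x = k := (hb.eq x y).symm.trans hk
    refine ⟨m + n + k, ?_⟩
    simp only [map_add, LinearMap.add_apply, hm, hn, hk, hk', Int.cast_add]
    ring
  | neg x _ h => simpa using h

theorem isNSForm_closure {b : BilinForm ℚ V} (hb : b.IsSymm) {S : Set (V ≃ₗ[ℚ] V)} {T : Set V}
    (hS : ∀ w ∈ S, b.IsOrthogonal w)
    (h_int : ∀ x ∈ T, ∀ y ∈ T, ∃ n : ℤ, b x y = n)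
    (heven : ∀ x ∈ T, ∃ n : ℤ, b x x = 2 * n) :
    IsNSForm (Subgroup.closure S) (AddSubgroup.closure T) b := by
  have h_int' : ∀ x ∈ AddSubgroup.closure T, ∀ y ∈ AddSubgroup.closure T, ∃ n : ℤ, b x y = n := by
    intro x hx y hy
    have hmem : b x y ∈ (Int.castAddHom ℚ).range :=
      apply_mem_of_mem_closure (fun x hx y hy ↦ (h_int x hx y hy).imp fun n hn ↦ hn.symm) hx hy
    exact hmem.imp fun n hn ↦ hn.symm
  exact ⟨hb.eq, fun w hw ↦ isOrthogonal_of_mem_closure hS hw, h_int',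
    fun x hx ↦ exists_apply_self_eq_two_mul_of_mem_closure hb h_int' heven hx⟩

end Lattice

section InvariantForm

variable {ι R M N : Type*} [CommRing R] [AddCommGroup M] [Module R M]
  [AddCommGroup N] [Module R N] {P : RootPairing ι R M N} {b c : BilinForm R M}

theorem two_mul_apply_root_left {i : ι} (hb : b.IsOrthogonal (P.reflection i)) (x : M) :
    2 * b (P.root i) x = P.coroot' i x * b (P.root i) (P.root i) := by
  have h : b (P.reflection i (P.root i)) (P.reflection i x) = b (P.root i) x := hb _ _
  rw [P.reflection_apply_self, P.reflection_apply] at h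
  simp only [map_neg, map_sub, map_smul, LinearMap.neg_apply, smul_eq_mul] at h
  linear_combination -h

variable [IsDomain R] [NeZero (2 : R)] [P.IsIrreducible]

theorem eq_zero_of_apply_root_self_eq_zero (hb : ∀ i, b.IsOrthogonal (P.reflection i)) {i : ι}
    (hi : b (P.root i) (P.root i) = 0) : b = 0 := by
  rw [← LinearMap.ker_eq_top]
  refine RootPairing.IsIrreducible.eq_top_of_invtSubmodule_reflection (P := P) _
    (fun j x hx ↦ ?_) ?_
  · ext y
    obtain ⟨y, rfl⟩ := (P.reflection j).surjective y
    exact (hb j x y).trans (DFunLike.congr_fun (LinearMap.mem_ker.mp hx) y)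
  · refine (Submodule.ne_bot_iff _).mpr ⟨P.root i, ?_, P.ne_zero i⟩
    ext x
    have h := two_mul_apply_root_left (hb i) x
    rw [hi, mul_zero] at h
    simpa [two_ne_zero] using h

theorem eq_of_apply_root_self_eq (hb : ∀ i, b.IsOrthogonal (P.reflection i))
    (hc : ∀ i, c.IsOrthogonal (P.reflection i)) {i : ι}
    (h : b (P.root i) (P.root i) = c (P.root i) (P.root i)) : b = c := by
  refine sub_eq_zero.mp (eq_zero_of_apply_root_self_eq_zero (P := P) (i := i) (fun j x y ↦ ?_) ?_)
  · simp only [LinearMap.sub_apply, hb j x y, hc j x y]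
  · simp only [LinearMap.sub_apply, h, sub_self]

end InvariantForm

section RootLength

variable {ι R M N : Type*} [Finite ι] [CommRing R] [IsDomain R] [CharZero R]
  [AddCommGroup M] [Module R M] [AddCommGroup N] [Module R N]
  (P : RootPairing ι R M N) [P.IsCrystallographic]

theorem pairingIn_dvd_swap_or (i j : ι) :
    P.pairingIn ℤ i j ∣ P.pairingIn ℤ j i ∨ P.pairingIn ℤ j i ∣ P.pairingIn ℤ i j := by
  have h := P.pairingIn_pairingIn_mem_set_of_isCrystallographic i j
  simp only [mem_insert_iff, mem_singleton_iff, Prod.mk.injEq] at h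
  rcases h with h | h | h | h | h | h | h | h | h | h | h | h | h | h | h | h | h <;>
    rw [h.1, h.2] <;> decide

variable {P} [P.IsIrreducible]

theorem exists_int_rootLength_ratio (B : P.InvariantForm) (i j : ι) :
    (∃ n : ℤ, B.form (P.root j) (P.root j) = n * B.form (P.root i) (P.root i)) ∨
      ∃ n : ℤ, B.form (P.root i) (P.root i) = n * B.form (P.root j) (P.root j) := by
  obtain ⟨k, hk, hik⟩ := P.exists_form_eq_form_and_form_ne_zero B i j
  rw [← hk]
  have hpair : P.pairing i k ≠ 0 := mt (B.apply_root_root_zero_iff i k).mpr hik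
  have hpair' : P.pairing k i ≠ 0 := mt P.pairing_eq_zero_iff'.mpr hpair
  have hswap := B.pairing_mul_eq_pairing_mul_swap i k
  simp only [← P.algebraMap_pairingIn ℤ, algebraMap_int_eq, eq_intCast] at hpair hpair' hswap
  rcases pairingIn_dvd_swap_or P i k with ⟨n, hn⟩ | ⟨n, hn⟩
  · refine .inl ⟨n, mul_left_cancel₀ hpair ?_⟩
    rw [← hswap, hn]
    push_cast
    ring
  · refine .inr ⟨n, mul_left_cancel₀ hpair' ?_⟩
    rw [hswap, hn]
    push_cast
    ring

end RootLength

section BasicForm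

variable {ι K M N : Type*} [Fintype ι] [Field K] [AddCommGroup M] [Module K M]
  [AddCommGroup N] [Module K N] (P : RootPairing ι K M N) (i : ι)

/-- The multiple of the canonical invariant form of a root pairing for which the root `i` has
square length `2`. If `i` is a shortest root, this is the basic inner product. -/
noncomputable def basicForm : BilinForm K M :=
  (2 / P.RootForm (P.root i) (P.root i)) • P.RootForm

theorem basicForm_isSymm : (basicForm P i).IsSymm where
  eq x y := congrArg (2 / P.RootForm (P.root i) (P.root i) * ·) (P.rootForm_symmetric.eq x y)

theorem basicForm_isOrthogonal_reflection (j : ι) :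
    (basicForm P i).IsOrthogonal (P.reflection j) := fun x y ↦
  congrArg (2 / P.RootForm (P.root i) (P.root i) * ·) (P.rootForm_reflection_reflection_apply j x y)

variable [LinearOrder K] [IsStrictOrderedRing K]

theorem rootForm_root_self_pos : 0 < P.RootForm (P.root i) (P.root i) :=
  P.rootForm_pos_of_ne_zero (Submodule.subset_span (mem_range_self i)) (P.ne_zero i)

theorem basicForm_root_self : basicForm P i (P.root i) (P.root i) = 2 :=
  div_mul_cancel₀ 2 (rootForm_root_self_pos P i).ne'

theorem basicForm_pos [P.IsRootSystem] {x : M} (hx : x ≠ 0) : 0 < basicForm P i x x :=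
  mul_pos (div_pos two_pos (rootForm_root_self_pos P i))
    (P.rootForm_pos_of_ne_zero (by simp) hx)

theorem exists_isLeast_basicForm [Nonempty ι] :
    ∃ i, IsLeast ((fun x ↦ basicForm P i x x) '' range P.root) 2 := by
  obtain ⟨i, hi⟩ := Finite.exists_min fun j ↦ P.RootForm (P.root j) (P.root j)
  refine ⟨i, ⟨_, mem_range_self i, basicForm_root_self P i⟩, ?_⟩
  rintro _ ⟨_, ⟨j, rfl⟩, rfl⟩
  calc 2 = basicForm P i (P.root i) (P.root i) := (basicForm_root_self P i).symm
    _ ≤ basicForm P i (P.root j) (P.root j) :=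
      mul_le_mul_of_nonneg_left (hi j) (div_pos two_pos (rootForm_root_self_pos P i)).le

variable {P i} [P.IsCrystallographic] [P.IsIrreducible]

theorem exists_basicForm_root_self_eq_two_mul
    (hi : IsLeast ((fun x ↦ basicForm P i x x) '' range P.root) 2) (j : ι) :
    ∃ n : ℤ, basicForm P i (P.root j) (P.root j) = 2 * n := by
  have hmin (j : ι) : 2 ≤ basicForm P i (P.root j) (P.root j) :=
    hi.2 (mem_image_of_mem _ (mem_range_self j))
  let B : P.InvariantForm :=
    { form := basicForm P i
      symm := ⟨(basicForm_isSymm P i).eq⟩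
      ne_zero := fun j ↦ (two_pos.trans_le (hmin j)).ne'
      isOrthogonal_reflection := basicForm_isOrthogonal_reflection P i }
  have hratio := exists_int_rootLength_ratio B i j
  simp only [B, basicForm_root_self] at hratio
  rcases hratio with ⟨n, hn⟩ | ⟨n, hn⟩
  · exact ⟨n, hn.trans (mul_comm _ _)⟩
  · have hj_pos : 0 < basicForm P i (P.root j) (P.root j) := two_pos.trans_le (hmin j)
    have hn_pos : (0 : K) < n := pos_of_mul_pos_left (hn ▸ two_pos) hj_pos.le
    have hn_one : (1 : K) ≤ n := mod_cast (Int.cast_pos.mp hn_pos : 0 < n)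
    have hj_le : basicForm P i (P.root j) (P.root j) ≤ 2 :=
      (le_mul_of_one_le_left hj_pos.le hn_one).trans_eq hn.symm
    exact ⟨1, by rw [hj_le.antisymm (hmin j), Int.cast_one, mul_one]⟩

end BasicForm

section NeronSeveri

variable {ι V N : Type*} [AddCommGroup V] [Module ℚ V]
  [AddCommGroup N] [Module ℚ N] {P : RootPairing ι ℚ V N} {b c : V →ₗ[ℚ] V →ₗ[ℚ] ℚ}

theorem basicForm_isNSForm [Fintype ι] [P.IsCrystallographic] [P.IsIrreducible] {i : ι}
    (hi : IsLeast ((fun x ↦ basicForm P i x x) '' range P.root) 2) :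
    IsNSForm (Subgroup.closure (range P.reflection)) (AddSubgroup.closure (range P.root))
      (basicForm P i) := by
  have heven := exists_basicForm_root_self_eq_two_mul hi
  refine isNSForm_closure (basicForm_isSymm P i) ?_ ?_ (forall_mem_range.mpr heven)
  · exact forall_mem_range.mpr (basicForm_isOrthogonal_reflection P i)
  · refine forall_mem_range.mpr fun j ↦ forall_mem_range.mpr fun k ↦ ?_
    obtain ⟨n, hn⟩ := heven j
    have h := two_mul_apply_root_left (basicForm_isOrthogonal_reflection P i j) (P.root k)
    rw [P.root_coroot'_eq_pairing, ← P.algebraMap_pairingIn ℤ, hn] at h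
    refine ⟨P.pairingIn ℤ k j * n, ?_⟩
    push_cast
    simp only [algebraMap_int_eq, eq_intCast] at h
    linarith

variable [P.IsIrreducible]
  (hb : IsNSForm (Subgroup.closure (range P.reflection)) (AddSubgroup.closure (range P.root)) b)
  (hc : IsNSForm (Subgroup.closure (range P.reflection)) (AddSubgroup.closure (range P.root)) c)

include hb hc

theorem IsNSForm.existsUnique_eq_int_smul {i : ι} (hi : b (P.root i) (P.root i) = 2) :
    ∃! n : ℤ, c = (n : ℚ) • b := by
  obtain ⟨n, hn⟩ := hc.2.2.2 _ (AddSubgroup.subset_closure (mem_range_self i))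
  have hmem (j : ι) := Subgroup.subset_closure (mem_range_self (f := P.reflection) j)
  refine ⟨n, eq_of_apply_root_self_eq (P := P) (i := i) (fun j ↦ hc.2.1 _ (hmem j)) ?_ ?_, ?_⟩
  · exact fun j x y ↦ congrArg ((n : ℚ) * ·) (hb.2.1 _ (hmem j) x y)
  · rw [hn, LinearMap.smul_apply, LinearMap.smul_apply, hi, smul_eq_mul, mul_comm]
  · rintro m rfl
    rw [LinearMap.smul_apply, LinearMap.smul_apply, hi, smul_eq_mul, mul_comm] at hn
    exact Int.cast_injective (mul_left_cancel₀ two_ne_zero hn)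

theorem IsNSForm.eq_of_isLeast_two (hb₂ : IsLeast ((fun x ↦ b x x) '' range P.root) 2)
    (hc₂ : IsLeast ((fun x ↦ c x x) '' range P.root) 2) : c = b := by
  obtain ⟨⟨_, ⟨i, rfl⟩, hi⟩, hb_min⟩ := hb₂
  obtain ⟨⟨_, ⟨j, rfl⟩, hj⟩, hc_min⟩ := hc₂
  have hbj : 2 ≤ b (P.root j) (P.root j) := hb_min (mem_image_of_mem _ (mem_range_self j))
  have hci : 2 ≤ c (P.root i) (P.root i) := hc_min (mem_image_of_mem _ (mem_range_self i))
  obtain ⟨n, rfl, -⟩ := hb.existsUnique_eq_int_smul hc hi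
  simp only [LinearMap.smul_apply, smul_eq_mul] at hi hj hci
  rw [hi] at hci
  have hn_ge : (1 : ℚ) ≤ n := by linarith
  have hn_le : (n : ℚ) ≤ 1 := by
    have : (n : ℚ) * 2 ≤ n * b (P.root j) (P.root j) :=
      mul_le_mul_of_nonneg_left hbj (zero_le_one.trans hn_ge)
    linarith
  rw [hn_le.antisymm hn_ge, one_smul]

end NeronSeveri

section CorootSystem

variable {ι K V : Type*} [Finite ι] [Field K] [CharZero K] [AddCommGroup V] [Module K V]
  {root : ι → Dual K V} {coroot : ι → V} (hpair : ∀ i, root i (coroot i) = 2)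
  (hrefl : ∀ i, MapsTo (reflection (hpair i)) (range coroot) (range coroot))

include hrefl in
theorem coroot_eq_of_root_eq {i j : ι} (h : root i = root j) : coroot i = coroot j :=
  have : IsAddTorsionFree V := .of_isTorsionFree K V
  eq_of_mapsTo_reflection_of_mem (finite_range coroot) (hpair i) (hpair j) (h ▸ hpair i)
    (h ▸ hpair j) (hrefl i) (hrefl j) (mem_range_self j)

variable (hspan : Submodule.span K (range coroot) = ⊤)

include hrefl hspan in
theorem root_eq_of_coroot_eq {i j : ι} (h : coroot i = coroot j) : root i = root j :=
  Dual.eq_of_preReflection_mapsTo (finite_range coroot) hspan (hpair i) (hrefl i)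
    (h ▸ hpair j) (h ▸ hrefl j)

variable [FiniteDimensional K V]

/-- The dual root system of a finite family of roots and coroots: its roots are the `coroot i` and
its coroots are the `root i`. As the family may have repetitions, the set of its coroots serves as
index type. -/
noncomputable def corootSystem : RootPairing (range coroot) K V (Dual K V) :=
  .mk'' (Dual.eval K V) (.subtype (· ∈ range coroot))
    ⟨fun v ↦ root (rangeSplitting coroot v), fun v w h ↦ Subtype.ext <| by
      simpa only [apply_rangeSplitting] using coroot_eq_of_root_eq hpair hrefl h⟩
    (fun v ↦ by
      simpa only [apply_rangeSplitting] using! hpair (rangeSplitting coroot v))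
    (fun v ↦ by
      simpa only [apply_rangeSplitting, Embedding.coe_subtype, Subtype.range_coe] using!
        hrefl (rangeSplitting coroot v))
    (by simpa only [Embedding.coe_subtype, Subtype.range_coe] using! hspan)

theorem range_root_corootSystem :
    range (corootSystem hpair hrefl hspan).root = range coroot :=
  Subtype.range_coe

theorem coroot_corootSystem (i : ι) :
    (corootSystem hpair hrefl hspan).coroot ⟨coroot i, mem_range_self i⟩ = root i :=
  root_eq_of_coroot_eq hpair hrefl hspan (apply_rangeSplitting coroot _)

theorem pairing_corootSystem (i j : ι) :
    (corootSystem hpair hrefl hspan).pairing ⟨coroot j, mem_range_self j⟩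
      ⟨coroot i, mem_range_self i⟩ = root i (coroot j) :=
  DFunLike.congr_fun (coroot_corootSystem hpair hrefl hspan i) (coroot j)

theorem reflection_corootSystem (i : ι) :
    (corootSystem hpair hrefl hspan).reflection ⟨coroot i, mem_range_self i⟩ =
      reflection (hpair i) := by
  ext x
  rw [RootPairing.reflection_apply, reflection_apply]
  exact congrArg (fun f : Dual K V ↦ x - f x • coroot i) (coroot_corootSystem hpair hrefl hspan i)

theorem range_reflection_corootSystem :
    range (corootSystem hpair hrefl hspan).reflection = range fun i ↦ reflection (hpair i) := by
  rw [← rangeFactorization_surjective.range_comp]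
  exact congrArg range (funext (reflection_corootSystem hpair hrefl hspan))

variable (hcrys : ∀ i j, ∃ n : ℤ, root i (coroot j) = n)

include hcrys

theorem corootSystem_isCrystallographic : (corootSystem hpair hrefl hspan).IsCrystallographic where
  exists_value := by
    rintro ⟨_, j, rfl⟩ ⟨_, i, rfl⟩
    exact (hcrys i j).imp fun n hn ↦ hn.symm.trans (pairing_corootSystem hpair hrefl hspan i j).symm

theorem corootSystem_isRootSystem : (corootSystem hpair hrefl hspan).IsRootSystem := by
  have := corootSystem_isCrystallographic hpair hrefl hspan hcrys
  exact RootPairing.isRootSystem_mk'' (corootSystem hpair hrefl hspan).exists_value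

theorem corootSystem_isIrreducible [Nonempty ι]
    (hirr : ∀ s : Set ι, (∀ i ∈ s, ∀ j ∉ s, root i (coroot j) = 0) → s = ∅ ∨ s = univ) :
    (corootSystem hpair hrefl hspan).IsIrreducible := by
  set P := corootSystem hpair hrefl hspan
  have := corootSystem_isRootSystem hpair hrefl hspan hcrys
  obtain ⟨i⟩ := ‹Nonempty ι›
  have : Nontrivial V := ⟨_, 0, P.ne_zero ⟨coroot i, mem_range_self i⟩⟩
  refine .mk' P fun q hq hq₀ ↦ P.eq_top_of_mem_invtSubmodule_of_forall_eq_univ q hq₀ hq ?_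
  rintro Φ ⟨⟨_, k, rfl⟩, hk⟩ hΦq hΦ
  -- The complement is needed because the roots outside `Φ` are those that kill the coroots in `Φ`.
  have hcompl : {j | rangeFactorization coroot j ∉ Φ} = ∅ ∨
      {j | rangeFactorization coroot j ∉ Φ} = univ := by
    refine hirr _ fun i hi j hj ↦ ?_
    rw [← pairing_corootSystem hpair hrefl hspan i j]
    exact hΦ _ hi (hΦq (mem_image_of_mem _ (not_not.mp hj)))
  rcases hcompl with h | h
  · rw [eq_univ_iff_forall]
    rintro ⟨_, j, rfl⟩
    by_contra hj
    exact eq_empty_iff_forall_notMem.mp h j hj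
  · exact absurd hk (eq_univ_iff_forall.mp h k)

end CorootSystem

theorem ns_irreducible_infinite_cyclic_general
    {V ι : Type*} [AddCommGroup V] [Module ℚ V] [Finite ι] [Nonempty ι]
    {root : ι → Dual ℚ V} {coroot : ι → V}
    (hpair : ∀ i, root i (coroot i) = 2)
    (hcrys : ∀ i j, ∃ n : ℤ, root i (coroot j) = n)
    (hrefl : ∀ i, MapsTo (reflection (hpair i)) (range coroot) (range coroot))
    (hspan : Submodule.span ℚ (range coroot) = ⊤)
    (hirr : ∀ s : Set ι, (∀ i ∈ s, ∀ j ∉ s, root i (coroot j) = 0) → s = ∅ ∨ s = univ)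
    (W : Subgroup (V ≃ₗ[ℚ] V))
    (hW : W = Subgroup.closure (range fun i ↦ reflection (hpair i)))
    (Q : AddSubgroup V)
    (hQ : Q = AddSubgroup.closure (range coroot)) :
    ∃ bR : V →ₗ[ℚ] V →ₗ[ℚ] ℚ,
      (IsNSForm W Q bR ∧ IsLeast (range fun i ↦ bR (coroot i) (coroot i)) 2) ∧
      (∀ b' : V →ₗ[ℚ] V →ₗ[ℚ] ℚ, IsNSForm W Q b' →
        IsLeast (range fun i ↦ b' (coroot i) (coroot i)) 2 → b' = bR) ∧
      (∀ x : V, x ≠ 0 → 0 < bR x x) ∧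
      (∀ b' : V →ₗ[ℚ] V →ₗ[ℚ] ℚ, IsNSForm W Q b' → ∃! n : ℤ, b' = (n : ℚ) • bR) := by
  have : FiniteDimensional ℚ V := ⟨hspan ▸ Submodule.fg_span (finite_range coroot)⟩
  have := Fintype.ofFinite (range coroot)
  let P := corootSystem hpair hrefl hspan
  have := corootSystem_isCrystallographic hpair hrefl hspan hcrys
  have := corootSystem_isRootSystem hpair hrefl hspan hcrys
  have := corootSystem_isIrreducible hpair hrefl hspan hcrys hirr
  have hdiag (b : V →ₗ[ℚ] V →ₗ[ℚ] ℚ) :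
      range (fun i ↦ b (coroot i) (coroot i)) = (fun x ↦ b x x) '' range P.root := by
    rw [range_root_corootSystem]
    exact range_comp (fun x ↦ b x x) coroot
  rw [← range_root_corootSystem hpair hrefl hspan] at hQ
  rw [← range_reflection_corootSystem hpair hrefl hspan] at hW
  subst hQ hW
  simp only [hdiag]
  obtain ⟨i, hi⟩ := exists_isLeast_basicForm P
  exact ⟨basicForm P i, ⟨basicForm_isNSForm hi, hi⟩,
    fun b' hb' hmin ↦ (basicForm_isNSForm hi).eq_of_isLeast_two hb' hi hmin,
    fun x hx ↦ basicForm_pos P i hx,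
    fun b' hb' ↦ (basicForm_isNSForm hi).existsUnique_eq_int_smul hb'
      (basicForm_root_self P i)⟩

/-- For an irreducible root system `R`, the group `NS(R)` of `W`-invariant
symmetric even `ℤ`-bilinear forms on the coroot lattice is infinite cyclic:
there is a unique such form `bR` (the basic inner product) whose minimum value
on `{b(α∨, α∨) | α a root}` equals `2`; it is positive definite, and every
element of `NS(R)` is `n • bR` for a unique integer `n`. -/
theorem ns_irreducible_infinite_cyclic
    (V : Type*) [AddCommGroup V] [Module ℚ V] [FiniteDimensional ℚ V]
    (ι : Type*) [Fintype ι] [Nonempty ι]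
    (root : ι → (V →ₗ[ℚ] ℚ)) (coroot : ι → V)
    (hpair : ∀ i, root i (coroot i) = 2)
    (hcrys : ∀ i j, ∃ n : ℤ, root i (coroot j) = (n : ℚ))
    (hreduced : ∀ i j, (∃ c : ℚ, root j = c • root i) →
      root j = root i ∨ root j = -root i)
    (hrefl_co : ∀ i j, ∃ k, Module.reflection (hpair i) (coroot j) = coroot k)
    (hrefl_root : ∀ i j, ∃ k, ∀ x : V,
      root j (Module.reflection (hpair i) x) = root k x)
    (hspan : Submodule.span ℚ (Set.range coroot) = ⊤)
    (hirr : ∀ s : Set ι, (∀ i ∈ s, ∀ j ∉ s, root i (coroot j) = 0) →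
      s = ∅ ∨ s = Set.univ)
    (W : Subgroup (V ≃ₗ[ℚ] V))
    (hW : W = Subgroup.closure (Set.range fun i => Module.reflection (hpair i)))
    (Q : AddSubgroup V)
    (hQ : Q = AddSubgroup.closure (Set.range coroot)) :
    ∃ bR : V →ₗ[ℚ] V →ₗ[ℚ] ℚ,
      (IsNSForm W Q bR ∧
        IsLeast (Set.range fun i => bR (coroot i) (coroot i)) 2) ∧
      (∀ b' : V →ₗ[ℚ] V →ₗ[ℚ] ℚ, IsNSForm W Q b' →
        IsLeast (Set.range fun i => b' (coroot i) (coroot i)) 2 → b' = bR) ∧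
      (∀ x : V, x ≠ 0 → 0 < bR x x) ∧
      (∀ b' : V →ₗ[ℚ] V →ₗ[ℚ] ℚ, IsNSForm W Q b' →
        ∃! n : ℤ, b' = (n : ℚ) • bR) :=
  ns_irreducible_infinite_cyclic_general hpair hcrys
    (fun i ↦ Set.forall_mem_range.mpr fun j ↦ (hrefl_co i j).imp fun _ h ↦ h.symm)
    hspan hirr W hW Q hQ
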